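/- arXiv:2412.07469 — 5 statements merged into one kernel-verified Lean document; each statement's English description precedes it below -/
import Mathlib

section
/- Let l : Fin d and suppose that for every j : Fin d the function f j does not depend on coordinate l. Then for every x : Fin d → ℝ, the partial derivative of log p at x along the l-th coordinate equals -(x l - f l x) / (σ l)^2. (This is the computation of the score of a leaf node in an additive Gaussian noise structural equation model, equation (13) of the paper.) -/
open Real MeasureTheory

/-!
Since `l` is a leaf, moving the `l`-th coordinate moves none of the conditional means. The only
factor of the joint density that varies is then the `l`-th one, a Gaussian density with fixed mean,
and every other factor adds a constant to `log p`.
-/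

open ProbabilityTheory Function
open scoped NNReal

section Gaussian

variable {v : ℝ≥0}

lemma log_gaussianPDFReal (μ : ℝ) (hv : v ≠ 0) (t : ℝ) :
    log (gaussianPDFReal μ v t) = log (√(2 * π * v))⁻¹ + -(t - μ) ^ 2 / (2 * v) := by
  have hnorm : (√(2 * π * v))⁻¹ ≠ 0 := by positivity
  rw [gaussianPDFReal, log_mul hnorm (exp_ne_zero _), log_exp]

lemma hasDerivAt_log_gaussianPDFReal (μ : ℝ) (hv : v ≠ 0) (t : ℝ) :
    HasDerivAt (fun s ↦ log (gaussianPDFReal μ v s)) (-(t - μ) / v) t := by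
  simp only [log_gaussianPDFReal μ hv]
  have hquad : HasDerivAt (fun s ↦ -(s - μ) ^ 2 / (2 * v)) (-(2 * (t - μ)) / (2 * v)) t := by
    simpa using ((((hasDerivAt_id t).sub_const μ).pow 2).neg).div_const (2 * (v : ℝ))
  exact (hquad.const_add _).congr_deriv (by rw [← mul_neg, mul_div_mul_left _ _ two_ne_zero])

lemma gaussianPDFReal_toNNReal_sq (μ : ℝ) {σ : ℝ} (hσ : 0 ≤ σ) (t : ℝ) :
    gaussianPDFReal μ (σ ^ 2).toNNReal t =
      (σ * √(2 * π))⁻¹ * exp (-(t - μ) ^ 2 / (2 * σ ^ 2)) := by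
  rw [gaussianPDFReal, coe_toNNReal _ (sq_nonneg σ), sqrt_mul' _ (sq_nonneg σ), sqrt_sq hσ,
    mul_comm σ]

end Gaussian

section StructuralEquationModel

variable {ι : Type*} [Fintype ι]

/-- The joint density of the additive Gaussian noise structural equation model
`X j = f j X + ε j`, with independent `ε j` of law `N(0, v j)`, as the product of the conditional
densities of the coordinates. Each `f j` takes the whole vector, the parents of `j` being the
coordinates it depends on; acyclicity of the parent relation, which makes the product a probability
density, is not built in. -/
noncomputable def gaussianSEMDensity (f : ι → (ι → ℝ) → ℝ) (v : ι → ℝ≥0) (x : ι → ℝ) : ℝ :=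
  ∏ j, gaussianPDFReal (f j x) (v j) (x j)

variable [DecidableEq ι] {f : ι → (ι → ℝ) → ℝ} {l : ι} {x : ι → ℝ}

lemma gaussianSEMDensity_update_of_leaf (v : ι → ℝ≥0)
    (hleaf : ∀ j t, f j x = f j (update x l t)) (t : ℝ) :
    gaussianSEMDensity f v (update x l t) =
      gaussianPDFReal (f l x) (v l) t *
        ∏ j ∈ Finset.univ \ {l}, gaussianPDFReal (f j x) (v j) (x j) := by
  simp only [gaussianSEMDensity, ← hleaf,
    apply_update (fun j ↦ gaussianPDFReal (f j x) (v j)) x l t]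
  exact Finset.prod_update_of_mem (Finset.mem_univ l) _ _

lemma hasDerivAt_log_gaussianSEMDensity_of_leaf {v : ι → ℝ≥0} (hv : ∀ j, v j ≠ 0)
    (hleaf : ∀ j t, f j x = f j (update x l t)) (t : ℝ) :
    HasDerivAt (fun s ↦ log (gaussianSEMDensity f v (update x l s))) (-(t - f l x) / v l) t := by
  have hpdf (j : ι) (s : ℝ) : gaussianPDFReal (f j x) (v j) s ≠ 0 :=
    (gaussianPDFReal_pos _ _ s (hv j)).ne'
  have hothers : ∏ j ∈ Finset.univ \ {l}, gaussianPDFReal (f j x) (v j) (x j) ≠ 0 :=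
    Finset.prod_ne_zero_iff.mpr fun j _ ↦ hpdf j (x j)
  simp only [gaussianSEMDensity_update_of_leaf v hleaf, log_mul (hpdf l _) hothers]
  exact (hasDerivAt_log_gaussianPDFReal (f l x) (hv l) t).add_const _

theorem leaf_score_general {σ : ι → ℝ} (hσ : ∀ j, 0 < σ j) {p : (ι → ℝ) → ℝ}
    (hp : ∀ y, p y = ∏ j, (σ j * √(2 * π))⁻¹ * exp (-(y j - f j y) ^ 2 / (2 * σ j ^ 2)))
    (hleaf : ∀ j t, f j x = f j (update x l t)) :
    HasDerivAt (fun t ↦ log (p (update x l t))) (-(x l - f l x) / σ l ^ 2) (x l) := by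
  have hp_eq : p = gaussianSEMDensity f fun j ↦ (σ j ^ 2).toNNReal := by
    ext y
    simp only [hp, gaussianSEMDensity, gaussianPDFReal_toNNReal_sq _ (hσ _).le]
  have hvar (j : ι) : (σ j ^ 2).toNNReal ≠ 0 := (toNNReal_pos.mpr (pow_pos (hσ j) 2)).ne'
  simpa only [hp_eq, coe_toNNReal _ (sq_nonneg (σ l))] using
    hasDerivAt_log_gaussianSEMDensity_of_leaf hvar hleaf (x l)

end StructuralEquationModel

/-- Score of a leaf node in an additive Gaussian noise SEM (equation (13)):
if no structural function depends on coordinate `l` (i.e. `l` is a leaf), then the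
partial derivative of `log p` along the `l`-th coordinate is `-(x l - f l x) / (σ l)^2`. -/
theorem leaf_score
    (d : ℕ) (σ : Fin d → ℝ) (hσ : ∀ j, 0 < σ j)
    (f : Fin d → (Fin d → ℝ) → ℝ) (hf : ∀ j, Differentiable ℝ (f j))
    (p : (Fin d → ℝ) → ℝ)
    (hp : ∀ x, p x = ∏ j, (σ j * Real.sqrt (2 * π))⁻¹ *
      Real.exp (-(x j - f j x) ^ 2 / (2 * (σ j) ^ 2)))
    (l : Fin d)
    (hleaf : ∀ (j : Fin d) (x : Fin d → ℝ) (t : ℝ), f j x = f j (Function.update x l t)) :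
    ∀ x : Fin d → ℝ,
      deriv (fun t => Real.log (p (Function.update x l t))) (x l)
        = -(x l - f l x) / (σ l) ^ 2 :=
  fun x ↦ (leaf_score_general hσ hp fun j ↦ hleaf j x).deriv
end

section
/- Assume in addition that each f j is twice differentiable. Then for every index i : Fin d and every x : Fin d → ℝ, the second partial derivative of log p at x along the i-th coordinate equals ∑_{j : Fin d} [ ((x j - f j x)/(σ j)^2) · (∂²_i f j)(x) − (δ_{i j} − (∂_i f j)(x))^2 / (σ j)^2 ], where δ_{i j} = 1 if i = j and 0 otherwise, ∂_i denotes the partial derivative along the i-th coordinate, and ∂²_i the second partial derivative along the i-th coordinate. (Diagonal Hessian entry of the log-density for a general node, used in the proof of Lemma 1.) -/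
open Real MeasureTheory

/-! Along the `i`-th coordinate line, `log p` is a constant minus `∑ j, r j ^ 2 / (2 * σ j ^ 2)`,
where the residual `r j = x j - f j x` has first derivative `δ_{ij} - ∂_i f j` and second derivative
`-∂²_i f j`. Each square contributes `(r ^ 2)'' = 2 * (r' ^ 2 + r * r'')`. -/

section SecondDerivative

open scoped Topology

variable {𝕜 : Type*} [NontriviallyNormedField 𝕜]
  {F : Type*} [NormedAddCommGroup F] [NormedSpace 𝕜 F]
  {𝔸 : Type*} [NormedCommRing 𝔸] [NormedAlgebra 𝕜 𝔸]
  {𝕜' : Type*} [NormedDivisionRing 𝕜'] [NormedAlgebra 𝕜 𝕜']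

/-- `g` is twice differentiable at `a`, with first derivative `g'` near `a` and second derivative
`g''` at `a`. Second derivatives are computed with it rule by rule, as first ones with
`HasDerivAt`. -/
structure HasSecondDerivAt (g g' : 𝕜 → F) (g'' : F) (a : 𝕜) : Prop where
  eventually_hasDerivAt : ∀ᶠ t in 𝓝 a, HasDerivAt g (g' t) t
  hasDerivAt_deriv : HasDerivAt g' g'' a

namespace HasSecondDerivAt

variable {g h g' h' : 𝕜 → F} {g'' h'' : F} {r r' : 𝕜 → 𝔸} {r'' : 𝔸} {a : 𝕜}

theorem deriv_deriv (hg : HasSecondDerivAt g g' g'' a) : deriv (deriv g) a = g'' :=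
  (hg.hasDerivAt_deriv.congr_of_eventuallyEq
    (hg.eventually_hasDerivAt.mono fun _ ht => ht.deriv)).deriv

theorem of_differentiableAt (hg : ∀ᶠ t in 𝓝 a, DifferentiableAt 𝕜 g t)
    (hg' : DifferentiableAt 𝕜 (deriv g) a) :
    HasSecondDerivAt g (deriv g) (deriv (deriv g) a) a :=
  ⟨hg.mono fun _ ht => ht.hasDerivAt, hg'.hasDerivAt⟩

theorem congr_deriv (hg : HasSecondDerivAt g g' g'' a) (h : g'' = h'') :
    HasSecondDerivAt g g' h'' a :=
  h ▸ hg

theorem const_add (c : F) (hg : HasSecondDerivAt g g' g'' a) :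
    HasSecondDerivAt (fun t => c + g t) g' g'' a :=
  ⟨hg.eventually_hasDerivAt.mono fun _ ht => ht.const_add c, hg.hasDerivAt_deriv⟩

theorem neg (hg : HasSecondDerivAt g g' g'' a) :
    HasSecondDerivAt (fun t => -g t) (fun t => -g' t) (-g'') a :=
  ⟨hg.eventually_hasDerivAt.mono fun _ ht => ht.fun_neg, hg.hasDerivAt_deriv.fun_neg⟩

theorem sub (hg : HasSecondDerivAt g g' g'' a) (hh : HasSecondDerivAt h h' h'' a) :
    HasSecondDerivAt (fun t => g t - h t) (fun t => g' t - h' t) (g'' - h'') a :=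
  ⟨(hg.eventually_hasDerivAt.and hh.eventually_hasDerivAt).mono fun _ ht => ht.1.fun_sub ht.2,
    hg.hasDerivAt_deriv.fun_sub hh.hasDerivAt_deriv⟩

theorem sum {ι : Type*} {s : Finset ι} {G G' : ι → 𝕜 → F} {G'' : ι → F}
    (hG : ∀ j ∈ s, HasSecondDerivAt (G j) (G' j) (G'' j) a) :
    HasSecondDerivAt (fun t => ∑ j ∈ s, G j t) (fun t => ∑ j ∈ s, G' j t) (∑ j ∈ s, G'' j) a where
  eventually_hasDerivAt :=
    ((Filter.eventually_all_finset s).2 fun j hj => (hG j hj).eventually_hasDerivAt).mono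
      fun _ ht => HasDerivAt.fun_sum ht
  hasDerivAt_deriv := HasDerivAt.fun_sum fun j hj => (hG j hj).hasDerivAt_deriv

theorem sq (hr : HasSecondDerivAt r r' r'' a) :
    HasSecondDerivAt (fun t => r t ^ 2) (fun t => 2 * (r t * r' t))
      (2 * (r' a ^ 2 + r a * r'')) a where
  eventually_hasDerivAt := hr.eventually_hasDerivAt.mono fun t ht =>
    (ht.fun_pow 2).congr_deriv (by ring)
  hasDerivAt_deriv :=
    ((hr.eventually_hasDerivAt.self_of_nhds.fun_mul hr.hasDerivAt_deriv).const_mul 2).congr_deriv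
      (by ring)

theorem div_const {g g' : 𝕜 → 𝕜'} {g'' : 𝕜'} (hg : HasSecondDerivAt g g' g'' a) (c : 𝕜') :
    HasSecondDerivAt (fun t => g t / c) (fun t => g' t / c) (g'' / c) a :=
  ⟨hg.eventually_hasDerivAt.mono fun _ ht => ht.div_const c, hg.hasDerivAt_deriv.div_const c⟩

end HasSecondDerivAt

theorem hasSecondDerivAt_update_apply {ι : Type*} [DecidableEq ι]
    (x : ι → 𝕜) (i j : ι) (a : 𝕜) :
    HasSecondDerivAt (fun t => Function.update x i t j)
      (fun _ => if i = j then (1 : 𝕜) else 0) 0 a where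
  eventually_hasDerivAt := .of_forall fun t => by
    obtain rfl | hij := eq_or_ne i j
    · simpa only [Function.update_self, if_true] using hasDerivAt_id' t
    · simpa only [Function.update_of_ne hij.symm, if_neg hij] using hasDerivAt_const t (x j)
  hasDerivAt_deriv := hasDerivAt_const a _

end SecondDerivative

theorem log_prod_mul_exp {ι : Type*} {s : Finset ι} {c : ι → ℝ} (hc : ∀ j ∈ s, c j ≠ 0)
    (e : ι → ℝ) : log (∏ j ∈ s, c j * exp (e j)) = ∑ j ∈ s, (log (c j) + e j) := by
  rw [log_prod fun j hj => mul_ne_zero (hc j hj) (exp_ne_zero _)]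
  exact Finset.sum_congr rfl fun j hj => by rw [log_mul (hc j hj) (exp_ne_zero _), log_exp]

section Gaussian

open scoped Topology

variable {ι : Type*} [DecidableEq ι]

theorem hasSecondDerivAt_neg_sq_residual_div {f : (ι → ℝ) → ℝ} {x : ι → ℝ} {i : ι}
    {f' : ℝ → ℝ} {f'' : ℝ}
    (hf : HasSecondDerivAt (fun t => f (Function.update x i t)) f' f'' (x i)) (j : ι) (s : ℝ) :
    HasSecondDerivAt
      (fun t => -(Function.update x i t j - f (Function.update x i t)) ^ 2 / (2 * s ^ 2))
      (fun t => -(2 * ((Function.update x i t j - f (Function.update x i t)) *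
        ((if i = j then 1 else 0) - f' t))) / (2 * s ^ 2))
      ((x j - f x) / s ^ 2 * f'' - ((if i = j then 1 else 0) - f' (x i)) ^ 2 / s ^ 2) (x i) := by
  refine (((hasSecondDerivAt_update_apply x i j (x i)).sub hf).sq.neg.div_const
    (2 * s ^ 2)).congr_deriv ?_
  simp only [Function.update_eq_self]
  ring

theorem hessian_diagonal_decomposition_general [Fintype ι]
    {σ : ι → ℝ} (hσ : ∀ j, 0 < σ j) {f : ι → (ι → ℝ) → ℝ} {p : (ι → ℝ) → ℝ}
    (hp : ∀ x, p x = ∏ j, (σ j * √(2 * π))⁻¹ * exp (-(x j - f j x) ^ 2 / (2 * σ j ^ 2)))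
    {i : ι} {x : ι → ℝ}
    (hf : ∀ j, ∀ᶠ t in 𝓝 (x i), DifferentiableAt ℝ (fun t => f j (Function.update x i t)) t)
    (hf' : ∀ j, DifferentiableAt ℝ (deriv fun t => f j (Function.update x i t)) (x i)) :
    deriv (deriv fun t => log (p (Function.update x i t))) (x i)
      = ∑ j, ((x j - f j x) / σ j ^ 2 * deriv (deriv fun t => f j (Function.update x i t)) (x i)
          - ((if i = j then 1 else 0)
              - deriv (fun t => f j (Function.update x i t)) (x i)) ^ 2 / σ j ^ 2) := by
  have hc : ∀ j ∈ Finset.univ, (σ j * √(2 * π))⁻¹ ≠ 0 := fun j _ =>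
    inv_ne_zero (mul_ne_zero (hσ j).ne' (by positivity))
  simp only [hp, log_prod_mul_exp hc]
  exact (HasSecondDerivAt.sum fun j _ => (hasSecondDerivAt_neg_sq_residual_div
    (.of_differentiableAt (hf j) (hf' j)) j (σ j)).const_add _).deriv_deriv

end Gaussian

/-- Diagonal Hessian entry of the log-density for a general node (used in the proof of
Lemma 1): for twice differentiable structural functions,
`∂²_i log p (x) = ∑ j [ ((x j - f j x)/(σ j)^2) ⬝ ∂²_i f j (x)
                      − (δ_{i j} − ∂_i f j (x))^2 / (σ j)^2 ]`. -/
theorem hessian_diagonal_decomposition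
    (d : ℕ) (σ : Fin d → ℝ) (hσ : ∀ j, 0 < σ j)
    (f : Fin d → (Fin d → ℝ) → ℝ) (hf : ∀ j, ContDiff ℝ 2 (f j))
    (p : (Fin d → ℝ) → ℝ)
    (hp : ∀ x, p x = ∏ j, (σ j * Real.sqrt (2 * π))⁻¹ *
      Real.exp (-(x j - f j x) ^ 2 / (2 * (σ j) ^ 2))) :
    ∀ (i : Fin d) (x : Fin d → ℝ),
      deriv (deriv (fun t => Real.log (p (Function.update x i t)))) (x i)
        = ∑ j, (((x j - f j x) / (σ j) ^ 2) *
                  deriv (deriv (fun t => f j (Function.update x i t))) (x i)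
                - ((if i = j then (1 : ℝ) else 0)
                    - deriv (fun t => f j (Function.update x i t)) (x i)) ^ 2 / (σ j) ^ 2) := by
  intro i x
  have hsection : ∀ j, ContDiff ℝ 2 fun t => f j (Function.update x i t) := fun j =>
    (hf j).comp (contDiff_update 2 x i)
  exact hessian_diagonal_decomposition_general hσ hp
    (fun j => .of_forall ((hsection j).differentiable two_ne_zero))
    fun j => (hsection j).differentiable_deriv_two (x i)
end

section
/- Let l : Fin d and suppose that for every j : Fin d the function f j does not depend on coordinate l. Then for every x : Fin d → ℝ, ∫_ℝ p (Function.update x l t) dt = ∏_{j ≠ l} (σ j * Real.sqrt (2π))⁻¹ * Real.exp (-(x j - f j x)^2 / (2 (σ j)^2)); in particular, integrating out the leaf coordinate l yields the product density over the remaining nodes, which does not depend on x l. (Marginalization of a leaf node, used in the proofs of Theorem 2 and Corollary 1.) -/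
open Real MeasureTheory

open scoped NNReal

open ProbabilityTheory (gaussianPDFReal integral_gaussianPDFReal_eq_one)

lemma gaussianPDFReal_sq (μ : ℝ) (s : ℝ≥0) (t : ℝ) :
    gaussianPDFReal μ (s ^ 2) t = (s * √(2 * π))⁻¹ * exp (-(t - μ) ^ 2 / (2 * s ^ 2)) := by
  have sqrt_eq : √(2 * π * s ^ 2) = s * √(2 * π) := by
    rw [sqrt_mul (by positivity), sqrt_sq s.coe_nonneg, mul_comm]
  rw [gaussianPDFReal, NNReal.coe_pow, sqrt_eq]

lemma integral_gaussian_density_eq_one {s : ℝ} (hs : 0 < s) (μ : ℝ) :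
    ∫ t : ℝ, (s * √(2 * π))⁻¹ * exp (-(t - μ) ^ 2 / (2 * s ^ 2)) = 1 := by
  lift s to ℝ≥0 using hs.le
  have variance_ne_zero : s ^ 2 ≠ 0 := pow_ne_zero 2 (NNReal.coe_pos.mp hs).ne'
  simp_rw [← gaussianPDFReal_sq]
  exact integral_gaussianPDFReal_eq_one μ variance_ne_zero

section Product

variable {ι : Type*} [Fintype ι] [DecidableEq ι]

lemma integral_prod_update {𝕜 : Type*} [RCLike 𝕜] {α : ι → Type*} (l : ι) [MeasurableSpace (α l)]
    (μ : Measure (α l)) (g : ι → (∀ i, α i) → 𝕜) (x : ∀ i, α i)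
    (hg : ∀ j ≠ l, ∀ t, g j (Function.update x l t) = g j x) :
    ∫ t, ∏ j, g j (Function.update x l t) ∂μ
      = (∫ t, g l (Function.update x l t) ∂μ) * ∏ j ∈ Finset.univ.erase l, g j x := by
  have prod_eq (t : α l) : ∏ j, g j (Function.update x l t)
      = g l (Function.update x l t) * ∏ j ∈ Finset.univ.erase l, g j x := by
    rw [← Finset.mul_prod_erase _ _ (Finset.mem_univ l)]
    congr 1
    exact Finset.prod_congr rfl fun j hj => hg j (Finset.ne_of_mem_erase hj) t
  simp_rw [prod_eq]
  exact integral_mul_const _ _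

theorem leaf_marginalization_general {σ : ι → ℝ} (f : ι → (ι → ℝ) → ℝ) {l : ι} (hσ : 0 < σ l)
    (hleaf : ∀ j x t, f j x = f j (Function.update x l t)) (x : ι → ℝ) :
    ∫ t : ℝ, ∏ j, (σ j * √(2 * π))⁻¹ *
        exp (-(Function.update x l t j - f j (Function.update x l t)) ^ 2 / (2 * σ j ^ 2))
      = ∏ j ∈ Finset.univ.erase l,
          (σ j * √(2 * π))⁻¹ * exp (-(x j - f j x) ^ 2 / (2 * σ j ^ 2)) := by
  let density (j : ι) (y : ι → ℝ) : ℝ :=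
    (σ j * √(2 * π))⁻¹ * exp (-(y j - f j y) ^ 2 / (2 * σ j ^ 2))
  have density_update (j : ι) (hj : j ≠ l) (t : ℝ) :
      density j (Function.update x l t) = density j x := by
    simp only [density, ← hleaf j x t, Function.update_of_ne hj]
  have integral_leaf : ∫ t, density l (Function.update x l t) = 1 := by
    simp only [density, ← hleaf l x, Function.update_self]
    exact integral_gaussian_density_eq_one hσ (f l x)
  calc ∫ t, ∏ j, density j (Function.update x l t)
      = (∫ t, density l (Function.update x l t)) * ∏ j ∈ Finset.univ.erase l, density j x :=
        integral_prod_update l volume density x density_update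
    _ = ∏ j ∈ Finset.univ.erase l, density j x := by rw [integral_leaf, one_mul]

end Product

/-- Marginalization of a leaf node (used in the proofs of Theorem 2 and Corollary 1):
integrating out the leaf coordinate `l` yields the product density over the remaining
nodes. -/
theorem leaf_marginalization
    (d : ℕ) (σ : Fin d → ℝ) (hσ : ∀ j, 0 < σ j)
    (f : Fin d → (Fin d → ℝ) → ℝ) (hf : ∀ j, Differentiable ℝ (f j))
    (p : (Fin d → ℝ) → ℝ)
    (hp : ∀ x, p x = ∏ j, (σ j * Real.sqrt (2 * π))⁻¹ *
      Real.exp (-(x j - f j x) ^ 2 / (2 * (σ j) ^ 2)))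
    (l : Fin d)
    (hleaf : ∀ (j : Fin d) (x : Fin d → ℝ) (t : ℝ), f j x = f j (Function.update x l t)) :
    ∀ x : Fin d → ℝ,
      ∫ t : ℝ, p (Function.update x l t)
        = ∏ j ∈ Finset.univ.erase l, (σ j * Real.sqrt (2 * π))⁻¹ *
            Real.exp (-(x j - f j x) ^ 2 / (2 * (σ j) ^ 2)) := by
  simp only [hp]
  exact leaf_marginalization_general f (hσ l) hleaf
end

section
/- Let ρ : ℝ → ℝ be twice differentiable with ρ(x) > 0 for all x and ∫_ℝ ρ = 1, and let q : ℝ → ℝ be twice differentiable. Assume q(x)·ρ'(x) → 0 and q'(x)·ρ(x) → 0 as x → ±∞, and that q·ρ'', q'·ρ', q''·ρ and q·(ρ')²/ρ are Lebesgue integrable on ℝ. Then ∫_ℝ q(x)·(log ρ)''(x)·ρ(x) dx = ∫_ℝ q''(x)·ρ(x) dx − ∫_ℝ q(x)·((log ρ)'(x))²·ρ(x) dx. (One-dimensional second-order Stein identity, equation (5) of the paper, the basis of the Hessian-diagonal estimator.) -/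
open Real MeasureTheory Filter

/-!
Since `(log ρ)'' ρ = ρ'' - ((log ρ)')² ρ`, only `∫ q ρ'' = ∫ q'' ρ` has to be shown. The Wronskian
`ρ q' - ρ' q` is an antiderivative of `ρ q'' - ρ'' q`, because the two products `ρ' q'` cancel, so
a single application of the fundamental theorem of calculus moves both derivatives at once.
-/

section Wronskian

variable {𝕜 E F G : Type*} [NontriviallyNormedField 𝕜]
  [NormedAddCommGroup E] [NormedAddCommGroup F] [NormedAddCommGroup G]

theorem hasDerivAt_bilinear_wronskian [NormedSpace 𝕜 E] [NormedSpace 𝕜 F] [NormedSpace 𝕜 G]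
    (L : E →L[𝕜] F →L[𝕜] G) {u u' : 𝕜 → E} {v v' : 𝕜 → F} {u'' : E} {v'' : F} {x : 𝕜}
    (hu : HasDerivAt u (u' x) x) (hu' : HasDerivAt u' u'' x)
    (hv : HasDerivAt v (v' x) x) (hv' : HasDerivAt v' v'' x) :
    HasDerivAt (fun y => L (u y) (v' y) - L (u' y) (v y)) (L (u x) v'' - L u'' (v x)) x := by
  have huv' := L.hasDerivAt_of_bilinear (fun _ => hu) (fun _ => hv')
  have hu'v := L.hasDerivAt_of_bilinear (fun _ => hu') (fun _ => hv)
  exact (huv'.sub hu'v).congr_deriv (by abel)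

variable [NormedSpace ℝ E] [NormedSpace ℝ F] [NormedSpace ℝ G] [CompleteSpace G]

theorem integral_bilinear_hasDerivAt_hasDerivAt_eq_sub
    (L : E →L[ℝ] F →L[ℝ] G) {u u' u'' : ℝ → E} {v v' v'' : ℝ → F} {a b : G}
    (hu : ∀ x, HasDerivAt u (u' x) x) (hu' : ∀ x, HasDerivAt u' (u'' x) x)
    (hv : ∀ x, HasDerivAt v (v' x) x) (hv' : ∀ x, HasDerivAt v' (v'' x) x)
    (huv'' : Integrable fun x => L (u x) (v'' x)) (hu''v : Integrable fun x => L (u'' x) (v x))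
    (hbot : Tendsto (fun x => L (u x) (v' x) - L (u' x) (v x)) atBot (nhds a))
    (htop : Tendsto (fun x => L (u x) (v' x) - L (u' x) (v x)) atTop (nhds b)) :
    ∫ x, L (u'' x) (v x) = (∫ x, L (u x) (v'' x)) - (b - a) := by
  have hwronskian : ∫ x, (L (u x) (v'' x) - L (u'' x) (v x)) = b - a :=
    integral_of_hasDerivAt_of_tendsto
      (fun x => hasDerivAt_bilinear_wronskian L (hu x) (hu' x) (hv x) (hv' x))
      (huv''.sub hu''v) hbot htop
  rw [← hwronskian, integral_sub huv'' hu''v, sub_sub_cancel]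

end Wronskian

section LogDeriv

variable {𝕜 𝕜' : Type*} [NontriviallyNormedField 𝕜] [NontriviallyNormedField 𝕜']
  [NormedAlgebra 𝕜 𝕜']

theorem logDeriv_sq_mul_self (f : 𝕜 → 𝕜') (x : 𝕜) :
    logDeriv f x ^ 2 * f x = deriv f x ^ 2 / f x := by
  rw [logDeriv_apply]
  field_simp

theorem deriv_logDeriv {f : 𝕜 → 𝕜'} {x : 𝕜} (hf : DifferentiableAt 𝕜 f x)
    (hf' : DifferentiableAt 𝕜 (deriv f) x) (hx : f x ≠ 0) :
    deriv (logDeriv f) x = deriv (deriv f) x / f x - logDeriv f x ^ 2 := by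
  rw [logDeriv_apply, logDeriv, deriv_div hf' hf hx]
  field_simp

theorem deriv_logDeriv_mul_self {f : 𝕜 → 𝕜'} {x : 𝕜} (hf : DifferentiableAt 𝕜 f x)
    (hf' : DifferentiableAt 𝕜 (deriv f) x) (hx : f x ≠ 0) :
    deriv (logDeriv f) x * f x = deriv (deriv f) x - deriv f x ^ 2 / f x := by
  rw [deriv_logDeriv hf hf' hx, sub_mul, div_mul_cancel₀ _ hx, logDeriv_sq_mul_self]

end LogDeriv

theorem stein_identity_second_order_general {𝕜 E : Type*}
    [NontriviallyNormedField 𝕜] [NormedAlgebra ℝ 𝕜] [NormedAddCommGroup E] [NormedSpace ℝ E]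
    [NormedSpace 𝕜 E] [IsScalarTower ℝ 𝕜 E] [CompleteSpace E]
    {ρ : ℝ → 𝕜} {q : ℝ → E} {a b : E}
    (hρ : Differentiable ℝ ρ) (hρ' : Differentiable ℝ (deriv ρ)) (hρ_ne : ∀ x, ρ x ≠ 0)
    (hq : Differentiable ℝ q) (hq' : Differentiable ℝ (deriv q))
    (hbot : Tendsto (fun x => ρ x • deriv q x - deriv ρ x • q x) atBot (nhds a))
    (htop : Tendsto (fun x => ρ x • deriv q x - deriv ρ x • q x) atTop (nhds b))
    (hρ''q : Integrable fun x => deriv (deriv ρ) x • q x)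
    (hρq'' : Integrable fun x => ρ x • deriv (deriv q) x)
    (hscore : Integrable fun x => (deriv ρ x ^ 2 / ρ x) • q x) :
    ∫ x, (deriv (logDeriv ρ) x * ρ x) • q x
      = (∫ x, ρ x • deriv (deriv q) x) - (∫ x, (logDeriv ρ x ^ 2 * ρ x) • q x) - (b - a) := by
  have hgreen : ∫ x, deriv (deriv ρ) x • q x = (∫ x, ρ x • deriv (deriv q) x) - (b - a) :=
    integral_bilinear_hasDerivAt_hasDerivAt_eq_sub (ContinuousLinearMap.lsmul ℝ 𝕜)
      (fun x => (hρ x).hasDerivAt) (fun x => (hρ' x).hasDerivAt)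
      (fun x => (hq x).hasDerivAt) (fun x => (hq' x).hasDerivAt) hρq'' hρ''q hbot htop
  simp only [deriv_logDeriv_mul_self (hρ _) (hρ' _) (hρ_ne _), logDeriv_sq_mul_self, sub_smul]
  rw [integral_sub hρ''q hscore, hgreen, sub_right_comm]

/-- One-dimensional second-order Stein identity (equation (5) of the paper):
for a positive twice differentiable density `ρ` and a twice differentiable test function
`q` with `q·ρ' → 0` and `q'·ρ → 0` at `±∞` and suitable integrability,
`∫ q·(log ρ)''·ρ = ∫ q''·ρ − ∫ q·((log ρ)')²·ρ`. -/
theorem stein_identity_second_order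
    (ρ q : ℝ → ℝ)
    (hρdiff : Differentiable ℝ ρ) (hρdiff2 : Differentiable ℝ (deriv ρ))
    (hρpos : ∀ x, 0 < ρ x) (hρint : (∫ x, ρ x) = 1)
    (hqdiff : Differentiable ℝ q) (hqdiff2 : Differentiable ℝ (deriv q))
    (htop1 : Tendsto (fun x => q x * deriv ρ x) atTop (nhds 0))
    (hbot1 : Tendsto (fun x => q x * deriv ρ x) atBot (nhds 0))
    (htop2 : Tendsto (fun x => deriv q x * ρ x) atTop (nhds 0))
    (hbot2 : Tendsto (fun x => deriv q x * ρ x) atBot (nhds 0))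
    (hint1 : Integrable (fun x => q x * deriv (deriv ρ) x))
    (hint2 : Integrable (fun x => deriv q x * deriv ρ x))
    (hint3 : Integrable (fun x => deriv (deriv q) x * ρ x))
    (hint4 : Integrable (fun x => q x * (deriv ρ x) ^ 2 / ρ x)) :
    ∫ x, q x * deriv (deriv (fun y => Real.log (ρ y))) x * ρ x
      = (∫ x, deriv (deriv q) x * ρ x)
        - ∫ x, q x * (deriv (fun y => Real.log (ρ y)) x) ^ 2 * ρ x := by
  have hlog : deriv (fun y => Real.log (ρ y)) = logDeriv ρ :=
    funext fun x => Real.deriv_log_comp_eq_logDeriv (hρdiff x) (hρpos x).ne'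
  have hgeneral := stein_identity_second_order_general hρdiff hρdiff2 (fun x => (hρpos x).ne')
    hqdiff hqdiff2 (a := 0) (b := 0)
    (by simpa [mul_comm] using hbot2.sub hbot1) (by simpa [mul_comm] using htop2.sub htop1)
    (by simpa only [smul_eq_mul, mul_comm] using hint1)
    (by simpa only [smul_eq_mul, mul_comm] using hint3)
    (by simpa only [smul_eq_mul, mul_comm, mul_div_assoc] using hint4)
  simpa [hlog, mul_comm, mul_assoc, mul_left_comm] using hgeneral
end

section
/- For every index i : Fin e and every (x, y) ∈ (Fin d → ℝ) × (Fin e → ℝ), the partial derivative of log g at (x, y) along the i-th coordinate of the y-block equals (∂ log h / ∂ y_i)(y) + ∑_{j : Fin d} ((x j − f j (x, y))/(σ j)²) · (∂ f j / ∂ y_i)(x, y). (Score decomposition with respect to a past-time-step coordinate, the key identity in the proof of Theorem 2 for t′ = t − 1.) -/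
open Real MeasureTheory

/-!
The logarithmic derivative turns products into sums and ignores nonzero constant factors, so each
Gaussian factor contributes only the derivative of its exponent `-(x j - f j) ^ 2 / (2 * σ j ^ 2)`.
-/

section LogDeriv

variable {t : ℝ}

lemma logDeriv_exp_comp {u : ℝ → ℝ} (hu : DifferentiableAt ℝ u t) :
    logDeriv (fun s => exp (u s)) t = deriv u t := by
  rw [logDeriv_apply, deriv_exp hu, mul_div_cancel_left₀ _ (exp_ne_zero _)]

lemma deriv_neg_sub_sq_div {m : ℝ → ℝ} (hm : DifferentiableAt ℝ m t) (x v : ℝ) :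
    deriv (fun s => -(x - m s) ^ 2 / (2 * v)) t = (x - m t) / v * deriv m t := by
  have hderiv : HasDerivAt (fun s => -(x - m s) ^ 2 / (2 * v))
      (-(2 * (x - m t) * -deriv m t) / (2 * v)) t := by
    simpa using ((hm.hasDerivAt.const_sub x).fun_pow 2).fun_neg.div_const (2 * v)
  rw [hderiv.deriv]
  ring

lemma logDeriv_const_mul_exp_neg_sub_sq_div {m : ℝ → ℝ} (hm : DifferentiableAt ℝ m t)
    {c : ℝ} (hc : c ≠ 0) (x v : ℝ) :
    logDeriv (fun s => c * exp (-(x - m s) ^ 2 / (2 * v))) t = (x - m t) / v * deriv m t := by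
  rw [logDeriv_const_mul _ _ hc, logDeriv_exp_comp (by fun_prop), deriv_neg_sub_sq_div hm]

lemma deriv_log_mul_prod {ι : Type*} {s : Finset ι} {h : ℝ → ℝ} {p : ι → ℝ → ℝ}
    (hh : DifferentiableAt ℝ h t) (hh₀ : h t ≠ 0)
    (hp : ∀ j ∈ s, DifferentiableAt ℝ (p j) t) (hp₀ : ∀ j ∈ s, p j t ≠ 0) :
    deriv (fun r => log (h r * ∏ j ∈ s, p j r)) t
      = deriv (fun r => log (h r)) t + ∑ j ∈ s, logDeriv (p j) t := by
  have hprod : DifferentiableAt ℝ (fun r => ∏ j ∈ s, p j r) t := .fun_finsetProd hp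
  have hprod₀ : ∏ j ∈ s, p j t ≠ 0 := Finset.prod_ne_zero_iff.mpr hp₀
  calc deriv (fun r => log (h r * ∏ j ∈ s, p j r)) t
      = logDeriv (fun r => h r * ∏ j ∈ s, p j r) t :=
        deriv_log_comp_eq_logDeriv (hh.fun_mul hprod) (mul_ne_zero hh₀ hprod₀)
    _ = logDeriv h t + ∑ j ∈ s, logDeriv (p j) t := by
        rw [logDeriv_mul t hh₀ hprod₀ hh hprod, logDeriv_prod hp₀ hp]
    _ = deriv (fun r => log (h r)) t + ∑ j ∈ s, logDeriv (p j) t :=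
        congrArg (· + _) (deriv_log_comp_eq_logDeriv hh hh₀).symm

end LogDeriv

theorem past_score_decomposition_general {ι Y : Type*} [Fintype ι]
    {σ : ι → ℝ} (hσ : ∀ j, σ j ≠ 0) {f : ι → (ι → ℝ) × Y → ℝ} {h : Y → ℝ}
    {g : (ι → ℝ) × Y → ℝ}
    (hg : ∀ x y, g (x, y) = h y * ∏ j, (σ j * Real.sqrt (2 * π))⁻¹ *
        Real.exp (-(x j - f j (x, y)) ^ 2 / (2 * (σ j) ^ 2)))
    {x : ι → ℝ} {γ : ℝ → Y} {t₀ : ℝ}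
    (hf : ∀ j, DifferentiableAt ℝ (fun t => f j (x, γ t)) t₀)
    (hh : DifferentiableAt ℝ (fun t => h (γ t)) t₀) (hh₀ : h (γ t₀) ≠ 0) :
    deriv (fun t => Real.log (g (x, γ t))) t₀
      = deriv (fun t => Real.log (h (γ t))) t₀
        + ∑ j, ((x j - f j (x, γ t₀)) / (σ j) ^ 2) * deriv (fun t => f j (x, γ t)) t₀ := by
  have hc : ∀ j, (σ j * √(2 * π))⁻¹ ≠ 0 := fun j =>
    inv_ne_zero (mul_ne_zero (hσ j) (by positivity))
  let p (j : ι) (t : ℝ) : ℝ :=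
    (σ j * √(2 * π))⁻¹ * exp (-(x j - f j (x, γ t)) ^ 2 / (2 * σ j ^ 2))
  have hp : ∀ j ∈ Finset.univ, DifferentiableAt ℝ (p j) t₀ := fun j _ =>
    ((((hf j).const_sub (x j)).fun_pow 2).fun_neg.div_const _).exp.const_mul _
  have hp₀ : ∀ j ∈ Finset.univ, p j t₀ ≠ 0 := fun j _ => mul_ne_zero (hc j) (exp_ne_zero _)
  simp only [hg]
  rw [deriv_log_mul_prod hh hh₀ hp hp₀]
  simp only [p, logDeriv_const_mul_exp_neg_sub_sq_div (hf _) (hc _)]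

/-- Score decomposition with respect to a past-time-step coordinate (key identity in the
proof of Theorem 2 for `t′ = t − 1`): for `g (x, y) = h y · ∏ⱼ N(x j; f j (x,y), σ j²)`,
`∂ log g / ∂ y_i (x, y) = ∂ log h / ∂ y_i (y)
   + ∑ⱼ ((x j − f j (x,y))/(σ j)²) · ∂ f j / ∂ y_i (x, y)`. -/
theorem past_score_decomposition
    (d e : ℕ) (σ : Fin d → ℝ) (hσ : ∀ j, 0 < σ j)
    (f : Fin d → (Fin d → ℝ) × (Fin e → ℝ) → ℝ) (hf : ∀ j, Differentiable ℝ (f j))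
    (h : (Fin e → ℝ) → ℝ) (hh : Differentiable ℝ h) (hhpos : ∀ y, 0 < h y)
    (g : (Fin d → ℝ) × (Fin e → ℝ) → ℝ)
    (hg : ∀ x y, g (x, y) = h y * ∏ j, (σ j * Real.sqrt (2 * π))⁻¹ *
        Real.exp (-(x j - f j (x, y)) ^ 2 / (2 * (σ j) ^ 2))) :
    ∀ (i : Fin e) (x : Fin d → ℝ) (y : Fin e → ℝ),
      deriv (fun t => Real.log (g (x, Function.update y i t))) (y i)
        = deriv (fun t => Real.log (h (Function.update y i t))) (y i)
          + ∑ j, ((x j - f j (x, y)) / (σ j) ^ 2) *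
              deriv (fun t => f j (x, Function.update y i t)) (y i) := by
  intro i x y
  have hu : DifferentiableAt ℝ (Function.update y i) (y i) :=
    (hasDerivAt_update y i (y i)).differentiableAt
  simpa only [Function.update_eq_self] using
    past_score_decomposition_general (fun j => (hσ j).ne') hg (γ := Function.update y i)
      (fun j => (hf j _).comp (y i) ((differentiableAt_const x).prodMk hu))
      ((hh _).comp (y i) hu) (hhpos _).ne'
end
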